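/- (Theorem of the Alternative for SDP feasibility.) Consider the semidefinite program with data A₁, …, A_m ∈ S^n and b ∈ ℝ^m, and suppose the feasible set {X ∈ S^n : Aᵢ • X = bᵢ for i = 1,…,m, X ⪰ 0} is nonempty. If there is no y ∈ ℝ^m such that Σᵢ yᵢ Aᵢ ⪰ 0, Σᵢ yᵢ Aᵢ ≠ 0, and Σᵢ bᵢ yᵢ = 0, then Slater's condition holds: there exists a feasible X that is positive definite. -/

import Mathlib

open Matrix
open scoped BigOperators

lemma sdp_aux_isOpen (n : ℕ) :
    IsOpen {M : Matrix (Fin n) (Fin n) ℝ | ∀ v ∈ Metric.sphere (0 : Fin n → ℝ) 1,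
      0 < v ⬝ᵥ (M *ᵥ v)} := by
  rw [isOpen_iff_mem_nhds]
  intro M hM
  have hc : Continuous (fun p : Matrix (Fin n) (Fin n) ℝ × (Fin n → ℝ) =>
      p.2 ⬝ᵥ (p.1 *ᵥ p.2)) := by
    fun_prop
  refine (isCompact_sphere (0 : Fin n → ℝ) 1).eventually_forall_of_forall_eventually ?_
  intro v hv
  exact hc.continuousAt.eventually (lt_mem_nhds (hM v hv))

lemma sdp_aux_pos (n : ℕ) (M : Matrix (Fin n) (Fin n) ℝ)
    (hM : ∀ v ∈ Metric.sphere (0 : Fin n → ℝ) 1, 0 < v ⬝ᵥ (M *ᵥ v))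
    (v : Fin n → ℝ) (hv : v ≠ 0) : 0 < v ⬝ᵥ (M *ᵥ v) := by
  have hn : 0 < ‖v‖ := norm_pos_iff.2 hv
  have h := hM (‖v‖⁻¹ • v) (by simp [norm_smul, hn.ne'])
  rw [mulVec_smul, dotProduct_smul, smul_dotProduct, smul_eq_mul, smul_eq_mul] at h
  have h2 : 0 < ‖v‖⁻¹ := inv_pos.2 hn
  exact pos_of_mul_pos_right (pos_of_mul_pos_right h h2.le) h2.le

/-- Theorem of the Alternative for SDP feasibility: if the feasible set
`{X ⪰ 0 : Aᵢ • X = bᵢ}` is nonempty and there is no `y ∈ ℝ^m` with `Σᵢ yᵢ Aᵢ ⪰ 0`,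
`Σᵢ yᵢ Aᵢ ≠ 0` and `Σᵢ bᵢ yᵢ = 0`, then Slater's condition holds: there is a feasible
positive definite `X`. -/
theorem sdp_theorem_of_the_alternative (n m : ℕ)
    (A : Fin m → Matrix (Fin n) (Fin n) ℝ) (hA : ∀ i, (A i).IsSymm)
    (b : Fin m → ℝ)
    (hfeas : ∃ X : Matrix (Fin n) (Fin n) ℝ,
      X.PosSemidef ∧ ∀ i, ((A i)ᵀ * X).trace = b i)
    (halt : ¬ ∃ y : Fin m → ℝ,
      (∑ i, y i • A i).PosSemidef ∧ (∑ i, y i • A i) ≠ 0 ∧ ∑ i, b i * y i = 0) :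
    ∃ X : Matrix (Fin n) (Fin n) ℝ,
      X.PosDef ∧ ∀ i, ((A i)ᵀ * X).trace = b i := by
  classical
  obtain ⟨X0, hX0, hX0b⟩ := hfeas
  by_contra hno
  -- the linear map `M ↦ (Aᵢ • M)ᵢ`
  let L : Matrix (Fin n) (Fin n) ℝ →ₗ[ℝ] (Fin m → ℝ) :=
    { toFun := fun M i => ((A i)ᵀ * M).trace
      map_add' := fun M N => by ext i; simp [Matrix.mul_add]
      map_smul' := fun c M => by ext i; simp }
  have hLa : ∀ M i, L M i = ((A i)ᵀ * M).trace := fun _ _ => rfl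
  let U : Set (Matrix (Fin n) (Fin n) ℝ) :=
    {M | ∀ v ∈ Metric.sphere (0 : Fin n → ℝ) 1, 0 < v ⬝ᵥ (M *ᵥ v)}
  have hUo : IsOpen U := sdp_aux_isOpen n
  have hUc : Convex ℝ U := by
    intro M hM N hN s t hs ht hst v hv
    have h1 := hM v hv
    have h2 := hN v hv
    rw [add_mulVec, dotProduct_add, smul_mulVec, smul_mulVec, dotProduct_smul, dotProduct_smul,
      smul_eq_mul, smul_eq_mul]
    rcases hs.eq_or_lt with rfl | hs
    · have : t = 1 := by linarith
      subst this; linarith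
    · have := mul_pos hs h1
      have := mul_nonneg ht h2.le
      linarith
  have hPD : ∀ M : Matrix (Fin n) (Fin n) ℝ, M.PosDef → M ∈ U := by
    intro M hM v hv
    have hv0 : v ≠ 0 := by
      rintro rfl
      simp at hv
    simpa using hM.dotProduct_mulVec_pos hv0
  have hLb : L X0 = b := funext hX0b
  have hnotin : L.rangeRestrict X0 ∉ L.rangeRestrict '' U := by
    rintro ⟨M, hM, hMX⟩
    have hMb : L M = b := by
      rw [← hLb]
      exact congrArg Subtype.val hMX
    apply hno
    refine ⟨(1 / 2 : ℝ) • (M + Mᵀ), ?_, ?_⟩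
    · refine PosDef.of_dotProduct_mulVec_pos ?_ ?_
      · ext i j
        simp [add_comm]
        ring
      · intro v hv
        have h := sdp_aux_pos n M hM v hv
        have h' : v ⬝ᵥ (Mᵀ *ᵥ v) = v ⬝ᵥ (M *ᵥ v) := by
          rw [mulVec_transpose, dotProduct_comm, ← dotProduct_mulVec]
        simp only [star_trivial]
        rw [smul_mulVec, dotProduct_smul, add_mulVec, dotProduct_add, h', smul_eq_mul]
        linarith
    · intro i
      have h1 : ((A i)ᵀ * M).trace = b i := by rw [← hLa, hMb]
      have h2 : ((A i)ᵀ * Mᵀ).trace = b i := by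
        rw [← h1, ← Matrix.transpose_mul, Matrix.trace_transpose, Matrix.trace_mul_comm,
          (hA i).eq]
      rw [Matrix.mul_smul, Matrix.trace_smul, Matrix.mul_add, Matrix.trace_add, h1, h2,
        smul_eq_mul]
      ring
  have hopen : IsOpen (L.rangeRestrict '' U) :=
    L.rangeRestrict.isOpenMap_of_finiteDimensional L.surjective_rangeRestrict U hUo
  obtain ⟨f, hf⟩ := geometric_hahn_banach_point_open
    (hUc.linear_image L.rangeRestrict) hopen hnotin
  obtain ⟨g, hg⟩ := LinearMap.exists_extend (f : L.range →ₗ[ℝ] ℝ)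
  have hfg : ∀ M, f (L.rangeRestrict M) = g (L M) := by
    intro M
    have := LinearMap.congr_fun hg (L.rangeRestrict M)
    simpa using this.symm
  let y : Fin m → ℝ := fun i => g (Pi.single i 1)
  have hgy : ∀ z : Fin m → ℝ, g z = ∑ i, z i * y i := by
    intro z
    conv_lhs => rw [pi_eq_sum_univ' z]
    simp [y, map_sum]
  have hsym : (∑ i, y i • A i)ᵀ = ∑ i, y i • A i := by
    rw [Matrix.transpose_sum]
    exact Finset.sum_congr rfl fun i _ => by rw [Matrix.transpose_smul, (hA i).eq]
  have hgL : ∀ M, g (L M) = ((∑ i, y i • A i) * M).trace := by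
    intro M
    rw [hgy, Finset.sum_mul, Matrix.trace_sum]
    refine Finset.sum_congr rfl fun i _ => ?_
    rw [hLa, (hA i).eq, Matrix.smul_mul, Matrix.trace_smul, smul_eq_mul, mul_comm]
  have key : ∀ M : Matrix (Fin n) (Fin n) ℝ, M.PosDef → g b < g (L M) := by
    intro M hM
    have := hf _ ⟨M, hPD M hM, rfl⟩
    rwa [hfg, hfg, hLb] at this
  have hnn : ∀ P : Matrix (Fin n) (Fin n) ℝ, P.PosSemidef → 0 ≤ g (L P) := by
    intro P hP
    by_contra hneg
    push Not at hneg
    have h1 := key 1 PosDef.one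
    set t : ℝ := (g (L 1) - g b) / (-(g (L P))) with ht
    have ht0 : 0 ≤ t := div_nonneg (by linarith) (by linarith)
    have h2 := key (1 + t • P) (PosDef.one.add_posSemidef (hP.smul ht0))
    rw [map_add, map_add, map_smul, map_smul, smul_eq_mul] at h2
    have h3 : t * g (L P) = -(g (L 1) - g b) := by
      rw [ht]
      field_simp [hneg.ne]
    linarith
  have hb0 : 0 ≤ g b := hLb ▸ hnn X0 hX0
  have hb1 : g b ≤ 0 := by
    by_contra hpos
    push Not at hpos
    have h1 := key 1 PosDef.one
    have h2 := key ((g b / g (L 1)) • 1) (PosDef.one.smul (div_pos hpos (by linarith)))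
    rw [map_smul, map_smul, smul_eq_mul, div_mul_cancel₀ _ (by linarith)] at h2
    exact lt_irrefl _ h2
  apply halt
  refine ⟨y, ?_, ?_, ?_⟩
  · refine PosSemidef.of_dotProduct_mulVec_nonneg ?_ ?_
    · rw [Matrix.IsHermitian, Matrix.conjTranspose_eq_transpose_of_trivial, hsym]
    · intro v
      have h := hnn _ (posSemidef_vecMulVec_self_star v)
      rw [hgL, Matrix.mul_vecMulVec, Matrix.trace_vecMulVec, dotProduct_comm] at h
      exact h
  · intro h0
    have h1 := key 1 PosDef.one
    rw [hgL, h0] at h1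
    simp at h1
    linarith
  · rw [← hgy]
    exact le_antisymm hb1 hb0
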